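/- Suppose Assumption 2 holds. Then P̃ is stochastic, and there exists w < ∞ such that κ(ε) = μ(I − e^{−α}P̃)^{−1} r + ε e^{−α} μ Σ_{k=0}^∞ a_{k+1,1} e^{−αk} P̃^k P̃⁽¹⁾ (I − e^{−α}P̃)^{−1} r + (ε²/2) e^{−α} μ Σ_{k=0}^∞ a_{k+1,2} e^{−αk} P̃^k P̃⁽²⁾ (I − e^{−α}P̃)^{−1} r + ε² e^{−2α} μ Σ_{k=1}^∞ a_{k1} e^{−α(k−1)} P̃^{k−1} P̃⁽¹⁾ (Σ_{l=k+1}^∞ a_{l1} e^{−α(l−k−1)} P̃^{l−k−1}) P̃⁽¹⁾ (I − e^{−α}P̃)^{−1} r + O(ε³(log(1/ε))^w) as ε↓0, all the displayed series being absolutely convergent. -/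

import Mathlib

open Matrix Topology Filter

/-- The matrix norm ‖A‖ = max_x Σ_y |A(x,y)|. -/
noncomputable def matNorm {T : Type*} [Fintype T] (A : Matrix T T ℝ) : ℝ :=
  ⨆ x, ∑ y, |A x y|

/-- A square matrix is stochastic if all entries are nonnegative and every row sums to 1. -/
def IsStochastic {T : Type*} [Fintype T] (P : Matrix T T ℝ) : Prop :=
  (∀ x y, 0 ≤ P x y) ∧ ∀ x, ∑ y, P x y = 1

/-- The ordered product P 1 * P 2 * ⋯ * P j. -/
noncomputable def prodP {T : Type*} [Fintype T] [DecidableEq T]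
    (P : ℕ → Matrix T T ℝ) (j : ℕ) : Matrix T T ℝ :=
  ((List.range j).map fun i => P (i + 1)).prod

/-- The expected infinite-horizon discounted reward
κ = Σ_{j=0}^∞ e^{−αj} μ (P₁⋯P_j) r. -/
noncomputable def kappa {S : Type*} [Fintype S] [DecidableEq S]
    (α : ℝ) (μ r : S → ℝ) (P : ℕ → Matrix S S ℝ) : ℝ :=
  ∑' j : ℕ, Real.exp (-α * j) * (μ ⬝ᵥ (prodP P j *ᵥ r))

/-!
Put `β = exp (-α)`, let `M i` be the product of the first `i` transition matrices and let
`e i = P (i + 1) - P̃`. The discounted value `V n = ∑ j, β ^ j • (P̃ ^ j * y (n + j))` of a stream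
`y` under the limiting dynamics satisfies `V n = y n + β • (P̃ * V (n + 1))`, so that
`∑ i, β ^ i • (M i * (y i - β • (e i * V (i + 1))))` telescopes to `V 0`. Hence passing from `P̃` to
the perturbed dynamics replaces the stream `y` by `i ↦ β • (e i * V (i + 1))`, up to the explicit
term `V 0`. Three such replacements, starting from `y = 1`, give the expansion to second order
with an error of third order in `e`.

The remainder in the expansion of `P i ε` is controlled only for `i ≤ log (1 / ε) ^ (1 + δ)`. Beyond
this window it is merely bounded by the growth of the coefficients, but there `q ^ i` exceeds every
power of `1 / ε` for each `q > 1`. So the remainder is `O(ε ^ 3 * log (1 / ε) ^ max s 0 * q ^ i)`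
uniformly in `i`, and for `q` close to `1` the factor `q ^ i` is absorbed by the discount.
-/

open Asymptotics

section SubexponentialGrowth

variable {ι E A : Type*} {l : Filter ι} {g h : ι → ℝ}

/-- The family of sequences `x t` is `O(g t)` along `l` up to subexponential growth in the index:
for every `q > 1`, `x t n = O(g t * q ^ n)` as `t` runs through `l`, uniformly in `n`. In this
class polynomial factors in the index cost nothing, and discounted sums lose no order. -/
def IsSubexpBigO [Norm E] (l : Filter ι) (x : ι → ℕ → E) (g : ι → ℝ) : Prop :=
  ∀ q : ℝ, 1 < q → (fun z : ι × ℕ => x z.1 z.2) =O[l ×ˢ ⊤] fun z => g z.1 * q ^ z.2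

theorem isSubexpBigO_iff [Norm E] {x : ι → ℕ → E} :
    IsSubexpBigO l x g ↔
      ∀ q : ℝ, 1 < q → ∃ C, ∀ᶠ t in l, ∀ n, ‖x t n‖ ≤ C * (‖g t‖ * q ^ n) := by
  refine forall₂_congr fun q hq => ?_
  simp only [isBigO_iff, prod_top, eventually_comap, Prod.forall, norm_mul, norm_pow,
    Real.norm_of_nonneg (zero_le_one.trans hq.le)]
  refine exists_congr fun C => eventually_congr (.of_forall fun t => ?_)
  exact ⟨fun H n => H t n rfl, fun H s n hs => hs ▸ H n⟩

theorem isSubexpBigO_const [SeminormedAddCommGroup E] {c : ℕ → E}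
    (hc : ∀ q : ℝ, 1 < q → c =O[atTop] fun n : ℕ => q ^ n) :
    IsSubexpBigO l (fun _ => c) fun _ => 1 := by
  refine isSubexpBigO_iff.2 fun q hq => ?_
  have hq₀ : 0 < q := zero_lt_one.trans hq
  obtain ⟨C, -, hC⟩ := bound_of_isBigO_nat_atTop (hc q hq)
  refine ⟨C, .of_forall fun _ n => ?_⟩
  simpa only [norm_one, one_mul, Real.norm_of_nonneg (pow_pos hq₀ n).le]
    using hC (pow_pos hq₀ n).ne'

theorem isSubexpBigO_of_eventually_norm_le [SeminormedAddCommGroup E] {x : ι → ℕ → E} {C : ℝ}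
    (hx : ∀ᶠ t in l, ∀ n, ‖x t n‖ ≤ C * ‖g t‖) : IsSubexpBigO l x g := by
  refine isSubexpBigO_iff.2 fun q hq => ⟨C, hx.mono fun t ht n => ?_⟩
  rw [← mul_assoc]
  exact (ht n).trans
    (le_mul_of_one_le_right ((norm_nonneg _).trans (ht n)) (one_le_pow₀ hq.le))

theorem isSubexpBigO_const_const [SeminormedAddCommGroup E] (v : E) :
    IsSubexpBigO l (fun _ _ => v) fun _ => 1 :=
  isSubexpBigO_of_eventually_norm_le (C := ‖v‖) (.of_forall fun _ _ => by simp)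

namespace IsSubexpBigO

theorem congr' [Norm E] {x y : ι → ℕ → E} (hx : IsSubexpBigO l x g)
    (hxy : ∀ᶠ t in l, ∀ n, x t n = y t n) : IsSubexpBigO l y g := fun q hq =>
  (hx q hq).congr' ((hxy.prod_inl ⊤).mono fun z hz => hz z.2) .rfl

theorem mono [Norm E] {x : ι → ℕ → E} (hx : IsSubexpBigO l x g) (hgh : g =O[l] h) :
    IsSubexpBigO l x h := fun q hq =>
  (hx q hq).trans ((hgh.comp_tendsto tendsto_fst).mul (isBigO_refl _ _))

theorem shift [Norm E] {x : ι → ℕ → E} (hx : IsSubexpBigO l x g) (k : ℕ) :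
    IsSubexpBigO l (fun t n => x t (n + k)) g := fun q hq => by
  have hk : Tendsto (fun z : ι × ℕ => (z.1, z.2 + k)) (l ×ˢ ⊤) (l ×ˢ ⊤) :=
    tendsto_fst.prodMk tendsto_top
  refine ((hx q hq).comp_tendsto hk).trans (.of_bound (‖q ^ k‖) (.of_forall fun z => ?_))
  simp only [Function.comp_apply, norm_mul, pow_add]
  exact le_of_eq (by ring)

theorem isBigO_apply [Norm E] {x : ι → ℕ → E} (hx : IsSubexpBigO l x g) (n : ℕ) :
    (fun t => x t n) =O[l] g := by
  obtain ⟨C, hC⟩ := isSubexpBigO_iff.1 hx 2 one_lt_two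
  refine .of_bound (C * 2 ^ n) (hC.mono fun t ht => (ht n).trans_eq (by ring))

theorem add [SeminormedAddCommGroup E] {x y : ι → ℕ → E} (hx : IsSubexpBigO l x g)
    (hy : IsSubexpBigO l y g) : IsSubexpBigO l (fun t n => x t n + y t n) g := fun q hq =>
  (hx q hq).add (hy q hq)

theorem sub [SeminormedAddCommGroup E] {x y : ι → ℕ → E} (hx : IsSubexpBigO l x g)
    (hy : IsSubexpBigO l y g) : IsSubexpBigO l (fun t n => x t n - y t n) g := fun q hq =>
  (hx q hq).sub (hy q hq)

theorem const_smul [SeminormedAddCommGroup E] [NormedSpace ℝ E] {x : ι → ℕ → E}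
    (hx : IsSubexpBigO l x g) (f : ι → ℝ) :
    IsSubexpBigO l (fun t n => f t • x t n) fun t => f t * g t := fun q hq => by
  simpa only [smul_eq_mul, mul_assoc] using
    (isBigO_refl (fun z : ι × ℕ => f z.1) (l ×ˢ ⊤)).smul (hx q hq)

theorem mul [SeminormedRing A] {x y : ι → ℕ → A} (hx : IsSubexpBigO l x g)
    (hy : IsSubexpBigO l y h) :
    IsSubexpBigO l (fun t n => x t n * y t n) fun t => g t * h t := fun q hq => by
  have hr : 1 < √q := Real.lt_sqrt_of_sq_lt (by rwa [one_pow])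
  refine ((hx _ hr).mul (hy _ hr)).congr_right fun z => ?_
  rw [mul_mul_mul_comm, ← mul_pow, Real.mul_self_sqrt (zero_le_one.trans hq.le)]

theorem smul_const [SeminormedAddCommGroup E] [NormedSpace ℝ E] {a : ι → ℕ → ℝ}
    (ha : IsSubexpBigO l a g) (v : E) : IsSubexpBigO l (fun t n => a t n • v) g := fun q hq =>
  .trans (.of_bound ‖v‖ (.of_forall fun _ => (norm_smul_le _ _).trans_eq (mul_comm _ _)))
    (ha q hq)

end IsSubexpBigO

end SubexponentialGrowth

section DiscountedSums

variable {ι A : Type*} [NormedRing A] [NormedAlgebra ℝ A] {β : ℝ} {T : A}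
  {l : Filter ι} {g h : ι → ℝ} {x y : ι → ℕ → A}

/-- The discounted value at time `n` of the reward stream `y` under the time-homogeneous
dynamics `T`. -/
noncomputable def discountedTail (β : ℝ) (T : A) (y : ℕ → A) (n : ℕ) : A :=
  ∑' j, β ^ j • (T ^ j * y (n + j))

theorem exists_one_lt_mul_sq_lt_one {β q : ℝ} (hβ : β < 1) (hq : 1 < q) :
    ∃ r, 1 < r ∧ r ≤ q ∧ β * r ^ 2 < 1 := by
  have hlim : Tendsto (fun r : ℝ => β * r ^ 2) (𝓝[>] 1) (𝓝 β) := by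
    simpa using ((by fun_prop : Continuous fun r : ℝ => β * r ^ 2).tendsto 1).mono_left
      nhdsWithin_le_nhds
  obtain ⟨r, hr, hr₁, hrq⟩ :=
    ((hlim.eventually_lt_const hβ).and (Ioo_mem_nhdsGT hq)).exists
  exact ⟨r, hr₁, hrq.le, hr⟩

namespace IsSubexpBigO

theorem exists_norm_discounted_le (hβ : |β| < 1)
    (hT : IsSubexpBigO l (fun _ j => T ^ j) fun _ => 1)
    (hx : IsSubexpBigO l x g) {q : ℝ} (hq : 1 < q) :
    ∃ C ρ, 0 ≤ ρ ∧ ρ < 1 ∧ ∀ᶠ t in l, ∀ n j,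
      ‖β ^ j • (T ^ j * x t (n + j))‖ ≤ C * (‖g t‖ * q ^ n) * ρ ^ j := by
  obtain ⟨r, hr₁, hrq, hρ⟩ := exists_one_lt_mul_sq_lt_one hβ hq
  obtain ⟨C, hC⟩ := isSubexpBigO_iff.1 hT r hr₁
  obtain ⟨D, hD⟩ := isSubexpBigO_iff.1 hx r hr₁
  refine ⟨|C| * |D|, |β| * r ^ 2, by positivity, hρ, ?_⟩
  filter_upwards [hC, hD] with t hCt hDt n j
  have hTj : ‖T ^ j‖ ≤ |C| * r ^ j :=
    (hCt j).trans (by rw [norm_one, one_mul]; gcongr; exact le_abs_self C)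
  have hxj : ‖x t (n + j)‖ ≤ |D| * (‖g t‖ * (q ^ n * r ^ j)) :=
    (hDt (n + j)).trans (by rw [pow_add]; gcongr; exact le_abs_self D)
  calc ‖β ^ j • (T ^ j * x t (n + j))‖ ≤ |β| ^ j * (‖T ^ j‖ * ‖x t (n + j)‖) := by
        rw [norm_smul, norm_pow, Real.norm_eq_abs]
        gcongr
        exact norm_mul_le _ _
    _ ≤ |β| ^ j * (|C| * r ^ j * (|D| * (‖g t‖ * (q ^ n * r ^ j)))) := by gcongr
    _ = |C| * |D| * (‖g t‖ * q ^ n) * (|β| * r ^ 2) ^ j := by ring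

theorem summable_norm_discounted (hβ : |β| < 1)
    (hT : IsSubexpBigO l (fun _ j => T ^ j) fun _ => 1) (hx : IsSubexpBigO l x g) :
    ∀ᶠ t in l, ∀ n, Summable fun j => ‖β ^ j • (T ^ j * x t (n + j))‖ := by
  obtain ⟨C, ρ, hρ₀, hρ₁, hle⟩ := hT.exists_norm_discounted_le hβ hx one_lt_two
  filter_upwards [hle] with t ht n
  exact .of_nonneg_of_le (fun _ => norm_nonneg _) (ht n)
    ((summable_geometric_of_lt_one hρ₀ hρ₁).mul_left _)

protected theorem discountedTail (hβ : |β| < 1) (hT : IsSubexpBigO l (fun _ j => T ^ j) fun _ => 1)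
    (hx : IsSubexpBigO l x g) : IsSubexpBigO l (fun t => discountedTail β T (x t)) g := by
  refine isSubexpBigO_iff.2 fun q hq => ?_
  obtain ⟨C, ρ, hρ₀, hρ₁, hle⟩ := hT.exists_norm_discounted_le hβ hx hq
  refine ⟨C * (1 - ρ)⁻¹, hle.mono fun t ht n => ?_⟩
  exact (tsum_of_norm_bounded ((hasSum_geometric_of_lt_one hρ₀ hρ₁).mul_left _)
    (ht n)).trans_eq (by ring)

theorem summable_norm (hβ : |β| < 1) (hx : IsSubexpBigO l x g) :
    ∀ᶠ t in l, Summable fun j => ‖β ^ j • x t j‖ := by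
  have h_one : IsSubexpBigO l (fun _ j => (1 : A) ^ j) fun _ => 1 := by
    simpa only [one_pow] using isSubexpBigO_const_const (1 : A)
  simpa using (h_one.summable_norm_discounted hβ hx).mono fun t ht => ht 0

theorem isBigO_tsum (hβ : |β| < 1) (hx : IsSubexpBigO l x g) :
    (fun t => ∑' j, β ^ j • x t j) =O[l] g := by
  have h_one : IsSubexpBigO l (fun _ j => (1 : A) ^ j) fun _ => 1 := by
    simpa only [one_pow] using isSubexpBigO_const_const (1 : A)
  simpa [discountedTail] using (h_one.discountedTail hβ hx).isBigO_apply 0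

end IsSubexpBigO

theorem discountedTail_eq_add {y : ℕ → A}
    (hy : ∀ n, Summable fun j => β ^ j • (T ^ j * y (n + j))) (n : ℕ) :
    discountedTail β T y n = y n + β • (T * discountedTail β T y (n + 1)) := by
  rw [discountedTail, (hy n).tsum_eq_zero_add, discountedTail, ← (hy (n + 1)).tsum_mul_left,
    ← tsum_const_smul'']
  simp only [pow_zero, one_smul, one_mul, add_zero, mul_smul_comm, smul_smul, pow_succ', mul_assoc,
    add_assoc, add_comm 1]

theorem IsSubexpBigO.eventually_discountedTail_sub [CompleteSpace A] (hβ : |β| < 1)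
    (hT : IsSubexpBigO l (fun _ j => T ^ j) fun _ => 1) (hx : IsSubexpBigO l x g)
    (hy : IsSubexpBigO l y h) :
    ∀ᶠ t in l, ∀ n, discountedTail β T (fun i => x t i - y t i) n =
      discountedTail β T (x t) n - discountedTail β T (y t) n := by
  filter_upwards [hT.summable_norm_discounted hβ hx, hT.summable_norm_discounted hβ hy]
    with t hxt hyt n
  simp only [discountedTail, ← (hxt n).of_norm.tsum_sub (hyt n).of_norm, mul_sub, smul_sub]

theorem IsSubexpBigO.one_sub_smul_mul_discountedTail_one [CompleteSpace A] [l.NeBot]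
    (hβ : |β| < 1) (hT : IsSubexpBigO l (fun _ j => T ^ j) fun _ => 1) :
    (1 - β • T) * discountedTail β T (fun _ => 1) 0 = 1 := by
  have hsum := eventually_const.1
    (hT.summable_norm_discounted hβ (isSubexpBigO_const_const (1 : A)))
  have hrec := discountedTail_eq_add (y := fun _ => (1 : A)) (fun n => (hsum n).of_norm) 0
  have hstationary : discountedTail β T (fun _ => 1) (0 + 1) = discountedTail β T (fun _ => 1) 0 :=
    rfl
  rw [hstationary] at hrec
  rw [sub_mul, one_mul, smul_mul_assoc, sub_eq_iff_eq_add]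
  exact hrec

end DiscountedSums

section PerturbedProducts

variable {ι A : Type*} [NormedRing A] [NormedAlgebra ℝ A] {β : ℝ} {T : A}
  {l : Filter ι} {g h : ι → ℝ} {M e y : ι → ℕ → A}

/-- The reward stream created by one deviation `e n` from the dynamics `T` at time `n`: the
deviation acts on the discounted value of `y` from time `n + 1` on. -/
noncomputable def perturbationStep (β : ℝ) (T : A) (e y : ℕ → A) (n : ℕ) : A :=
  e n * discountedTail β T y (n + 1)

-- With `V` the discounted tail, the sums of `β ^ i • M i * (y i - β • e i * V (i + 1))` telescope.
theorem tsum_mul_eq_discountedTail_add {M e y : ℕ → A} (hM₀ : M 0 = 1)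
    (hM : ∀ i, M (i + 1) = M i * (T + e i))
    (hy : ∀ n, Summable fun j => β ^ j • (T ^ j * y (n + j)))
    (hMy : Summable fun i => β ^ i • (M i * y i))
    (hMe : Summable fun i => β ^ i • (M i * perturbationStep β T e y i))
    (hMV : Tendsto (fun i => β ^ i • (M i * discountedTail β T y i)) atTop (𝓝 0)) :
    ∑' i, β ^ i • (M i * y i) = discountedTail β T y 0 +
      β • ∑' i, β ^ i • (M i * perturbationStep β T e y i) := by
  set V := discountedTail β T y with hV
  have hstep : ∀ i, β ^ i • (M i * y i) - β • β ^ i • (M i * perturbationStep β T e y i) =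
      β ^ i • (M i * V i) - β ^ (i + 1) • (M (i + 1) * V (i + 1)) := fun i => by
    rw [perturbationStep, hM, hV, discountedTail_eq_add hy i, smul_smul, ← pow_succ', pow_succ]
    simp only [mul_add, add_mul, smul_add, mul_smul, mul_smul_comm, mul_assoc]
    abel
  have hsum := (hMy.hasSum.sub (hMe.hasSum.const_smul β)).tendsto_sum_nat
  simp only [hstep, Finset.sum_range_sub'] at hsum
  have hlim := hMV.const_sub (β ^ 0 • (M 0 * V 0))
  have heq := tendsto_nhds_unique hsum hlim
  rw [pow_zero, hM₀, one_smul, one_mul, sub_zero] at heq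
  exact sub_eq_iff_eq_add.1 heq

namespace IsSubexpBigO

protected theorem perturbationStep (hβ : |β| < 1)
    (hT : IsSubexpBigO l (fun _ j => T ^ j) fun _ => 1)
    (he : IsSubexpBigO l e g) (hy : IsSubexpBigO l y h) :
    IsSubexpBigO l (fun t => perturbationStep β T (e t) (y t)) fun t => g t * h t :=
  he.mul ((hT.discountedTail hβ hy).shift 1)

theorem perturbationStep_iterate (hβ : |β| < 1)
    (hT : IsSubexpBigO l (fun _ j => T ^ j) fun _ => 1)
    (he : IsSubexpBigO l e g) (hy : IsSubexpBigO l y h) (n : ℕ) :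
    IsSubexpBigO l (fun t => (perturbationStep β T (e t))^[n] (y t))
      fun t => g t ^ n * h t := by
  induction n with
  | zero => simpa using hy
  | succ n ih =>
    simpa only [Function.iterate_succ_apply', pow_succ', mul_assoc] using
      hT.perturbationStep hβ he ih

variable [CompleteSpace A]

theorem eventually_tsum_mul_eq (hβ : |β| < 1) (hT : IsSubexpBigO l (fun _ j => T ^ j) fun _ => 1)
    (hM₀ : ∀ t, M t 0 = 1) (hM : ∀ t i, M t (i + 1) = M t i * (T + e t i))
    (hM_bdd : IsSubexpBigO l M fun _ => 1) (he : IsSubexpBigO l e g) (hy : IsSubexpBigO l y h) :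
    ∀ᶠ t in l, ∑' i, β ^ i • (M t i * y t i) = discountedTail β T (y t) 0 +
      β • ∑' i, β ^ i • (M t i * perturbationStep β T (e t) (y t) i) := by
  filter_upwards [hT.summable_norm_discounted hβ hy, (hM_bdd.mul hy).summable_norm hβ,
    (hM_bdd.mul (hT.perturbationStep hβ he hy)).summable_norm hβ,
    (hM_bdd.mul (hT.discountedTail hβ hy)).summable_norm hβ] with t hyt hMy hMe hMV
  exact tsum_mul_eq_discountedTail_add (hM₀ t) (hM t) (fun n => (hyt n).of_norm) hMy.of_norm
    hMe.of_norm hMV.of_norm.tendsto_atTop_zero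

theorem eventually_tsum_mul_eq_sum (hβ : |β| < 1)
    (hT : IsSubexpBigO l (fun _ j => T ^ j) fun _ => 1)
    (hM₀ : ∀ t, M t 0 = 1) (hM : ∀ t i, M t (i + 1) = M t i * (T + e t i))
    (hM_bdd : IsSubexpBigO l M fun _ => 1) (he : IsSubexpBigO l e g) (hy : IsSubexpBigO l y h)
    (n : ℕ) :
    ∀ᶠ t in l, ∑' i, β ^ i • (M t i * y t i) =
      ∑ k ∈ Finset.range n,
          β ^ k • discountedTail β T ((perturbationStep β T (e t))^[k] (y t)) 0 +
        β ^ n • ∑' i, β ^ i • (M t i * (perturbationStep β T (e t))^[n] (y t) i) := by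
  induction n with
  | zero => simp
  | succ n ih =>
    filter_upwards [ih, hT.eventually_tsum_mul_eq hβ hM₀ hM hM_bdd he
      (hT.perturbationStep_iterate hβ he hy n)] with t ht hstep
    rw [ht, hstep, Finset.sum_range_succ, Function.iterate_succ_apply', smul_add, smul_smul,
      ← pow_succ, add_assoc]

theorem isBigO_tsum_mul_sub_sum (hβ : |β| < 1)
    (hT : IsSubexpBigO l (fun _ j => T ^ j) fun _ => 1)
    (hM₀ : ∀ t, M t 0 = 1) (hM : ∀ t i, M t (i + 1) = M t i * (T + e t i))
    (hM_bdd : IsSubexpBigO l M fun _ => 1) (he : IsSubexpBigO l e g) (hy : IsSubexpBigO l y h)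
    (n : ℕ) :
    (fun t => ∑' i, β ^ i • (M t i * y t i) - ∑ k ∈ Finset.range n,
      β ^ k • discountedTail β T ((perturbationStep β T (e t))^[k] (y t)) 0)
      =O[l] fun t => g t ^ n * h t := by
  have hrem := (hM_bdd.mul (hT.perturbationStep_iterate hβ he hy n)).isBigO_tsum hβ
  refine ((hrem.const_smul_left (β ^ n)).congr' ?_ (.of_forall fun t => by ring))
  filter_upwards [hT.eventually_tsum_mul_eq_sum hβ hM₀ hM hM_bdd he hy n] with t ht
  rw [ht, add_sub_cancel_left, Pi.smul_apply]

end IsSubexpBigO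

end PerturbedProducts

section SecondOrder

variable {ι A : Type*} [NormedRing A] [NormedAlgebra ℝ A] {β : ℝ} {T : A}
  {l : Filter ι} {g h η : ι → ℝ} {M e e₁ e₂ x x₁ y : ι → ℕ → A}

theorem perturbationStep_sub_left (e e' y : ℕ → A) :
    perturbationStep β T (fun i => e i - e' i) y =
      fun n => perturbationStep β T e y n - perturbationStep β T e' y n :=
  funext fun _ => sub_mul _ _ _

namespace IsSubexpBigO

variable [CompleteSpace A]

theorem isBigO_discountedTail_perturbationStep_sub_sub (hβ : |β| < 1)
    (hT : IsSubexpBigO l (fun _ j => T ^ j) fun _ => 1)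
    (he : IsSubexpBigO l e g) (he₁ : IsSubexpBigO l e₁ g) (he₂ : IsSubexpBigO l e₂ g)
    (hrem : IsSubexpBigO l (fun t n => e t n - e₁ t n - e₂ t n) η) (hy : IsSubexpBigO l y h) :
    (fun t => discountedTail β T (perturbationStep β T (e t) (y t)) 0 -
      discountedTail β T (perturbationStep β T (e₁ t) (y t)) 0 -
      discountedTail β T (perturbationStep β T (e₂ t) (y t)) 0) =O[l] fun t => η t * h t := by
  have hx := hT.perturbationStep hβ he hy
  have hx₁ := hT.perturbationStep hβ he₁ hy
  have hx₂ := hT.perturbationStep hβ he₂ hy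
  refine ((hT.discountedTail hβ (hT.perturbationStep hβ hrem hy)).isBigO_apply 0).congr' ?_ .rfl
  filter_upwards [hT.eventually_discountedTail_sub hβ hx hx₁,
    hT.eventually_discountedTail_sub hβ (hx.sub hx₁) hx₂] with t hsub hsub₂
  simp only [perturbationStep_sub_left, hsub, hsub₂]

theorem perturbationStep_sub (hβ : |β| < 1)
    (hT : IsSubexpBigO l (fun _ j => T ^ j) fun _ => 1) (he₁ : IsSubexpBigO l e₁ g)
    (hee₁ : IsSubexpBigO l (fun t n => e t n - e₁ t n) fun t => g t ^ 2)
    (hx : IsSubexpBigO l x fun t => g t * h t) (hx₁ : IsSubexpBigO l x₁ fun t => g t * h t)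
    (hxx₁ : IsSubexpBigO l (fun t n => x t n - x₁ t n) fun t => g t ^ 2 * h t) :
    IsSubexpBigO l (fun t n => perturbationStep β T (e t) (x t) n -
      perturbationStep β T (e₁ t) (x₁ t) n) fun t => g t ^ 3 * h t := by
  have hleft := (hT.perturbationStep hβ hee₁ hx).mono (h := fun t => g t ^ 3 * h t)
    (EventuallyEq.isBigO (.of_forall fun t => by ring))
  have hright := (hT.perturbationStep hβ he₁ hxx₁).mono (h := fun t => g t ^ 3 * h t)
    (EventuallyEq.isBigO (.of_forall fun t => by ring))
  refine (hleft.add hright).congr' ?_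
  filter_upwards [hT.eventually_discountedTail_sub hβ hx hx₁] with t hsub n
  simp only [perturbationStep, hsub, sub_mul, mul_sub, sub_add_sub_cancel]

theorem isBigO_discountedTail_perturbationStep_twice_sub (hβ : |β| < 1)
    (hT : IsSubexpBigO l (fun _ j => T ^ j) fun _ => 1)
    (he : IsSubexpBigO l e g) (he₁ : IsSubexpBigO l e₁ g)
    (hee₁ : IsSubexpBigO l (fun t n => e t n - e₁ t n) fun t => g t ^ 2)
    (hy : IsSubexpBigO l y h) :
    (fun t =>
      discountedTail β T (perturbationStep β T (e t) (perturbationStep β T (e t) (y t))) 0 -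
      discountedTail β T (perturbationStep β T (e₁ t) (perturbationStep β T (e₁ t) (y t))) 0)
      =O[l] fun t => g t ^ 3 * h t := by
  have hx := hT.perturbationStep hβ he hy
  have hx₁ := hT.perturbationStep hβ he₁ hy
  have hxx₁ : IsSubexpBigO l (fun t n => perturbationStep β T (e t) (y t) n -
      perturbationStep β T (e₁ t) (y t) n) fun t => g t ^ 2 * h t := by
    simpa only [perturbationStep_sub_left] using hT.perturbationStep hβ hee₁ hy
  refine ((hT.discountedTail hβ
    (hT.perturbationStep_sub hβ he₁ hee₁ hx hx₁ hxx₁)).isBigO_apply 0).congr' ?_ .rfl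
  filter_upwards [hT.eventually_discountedTail_sub hβ (hT.perturbationStep hβ he hx)
    (hT.perturbationStep hβ he₁ hx₁)] with t hsub
  exact hsub 0

theorem isBigO_tsum_mul_sub_secondOrder (hβ : |β| < 1)
    (hT : IsSubexpBigO l (fun _ j => T ^ j) fun _ => 1)
    (hM₀ : ∀ t, M t 0 = 1) (hM : ∀ t i, M t (i + 1) = M t i * (T + e t i))
    (hM_bdd : IsSubexpBigO l M fun _ => 1) (hg : g =O[l] fun _ => (1 : ℝ))
    (hη₂ : η =O[l] fun t => g t ^ 2) (hη₃ : (fun t => g t ^ 3) =O[l] η)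
    (he₁ : IsSubexpBigO l e₁ g) (he₂ : IsSubexpBigO l e₂ fun t => g t ^ 2)
    (hrem : IsSubexpBigO l (fun t n => e t n - e₁ t n - e₂ t n) η) (hy : IsSubexpBigO l y h) :
    (fun t => ∑' i, β ^ i • (M t i * y t i) - (discountedTail β T (y t) 0 +
      β • discountedTail β T (perturbationStep β T (e₁ t) (y t)) 0 +
      β • discountedTail β T (perturbationStep β T (e₂ t) (y t)) 0 +
      β ^ 2 • discountedTail β T
        (perturbationStep β T (e₁ t) (perturbationStep β T (e₁ t) (y t))) 0))
      =O[l] fun t => η t * h t := by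
  have hg₂ : (fun t => g t ^ 2) =O[l] g := by
    simpa only [pow_two, mul_one] using (isBigO_refl g l).mul hg
  have hee₁ : IsSubexpBigO l (fun t n => e t n - e₁ t n) fun t => g t ^ 2 := by
    simpa only [sub_add_cancel] using (hrem.mono hη₂).add he₂
  have he : IsSubexpBigO l e g := by
    simpa only [sub_add_cancel] using (hee₁.mono hg₂).add he₁
  have hexp := hT.isBigO_tsum_mul_sub_sum hβ hM₀ hM hM_bdd he hy 3
  have hfirst := hT.isBigO_discountedTail_perturbationStep_sub_sub hβ he he₁ (he₂.mono hg₂) hrem hy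
  have hsecond := hT.isBigO_discountedTail_perturbationStep_twice_sub hβ he he₁ hee₁ hy
  have hη₃h : (fun t => g t ^ 3 * h t) =O[l] fun t => η t * h t := hη₃.mul (isBigO_refl h l)
  refine (((hexp.trans hη₃h).add (hfirst.const_smul_left β)).add
    ((hsecond.trans hη₃h).const_smul_left (β ^ 2))).congr_left fun t => ?_
  simp only [Finset.sum_range_succ, Finset.sum_range_zero, Function.iterate_succ_apply',
    Function.iterate_zero_apply, Pi.smul_apply, smul_sub, pow_zero, pow_one, one_smul, zero_add]
  abel

end IsSubexpBigO

end SecondOrder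

section Coefficients

variable {A : Type*} [NormedRing A] [NormedAlgebra ℝ A] {β : ℝ} {T : A}

theorem discountedTail_const_smul (t : ℝ) (y : ℕ → A) :
    discountedTail β T (fun i => t • y i) = fun n => t • discountedTail β T y n := by
  funext n
  simp only [discountedTail, ← tsum_const_smul'', mul_smul_comm, smul_comm t]

theorem perturbationStep_const_smul_left (t : ℝ) (e y : ℕ → A) :
    perturbationStep β T (fun i => t • e i) y = fun n => t • perturbationStep β T e y n :=
  funext fun _ => smul_mul_assoc _ _ _

theorem perturbationStep_const_smul_right (t : ℝ) (e y : ℕ → A) :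
    perturbationStep β T e (fun i => t • y i) = fun n => t • perturbationStep β T e y n := by
  funext n
  simp only [perturbationStep, discountedTail_const_smul, mul_smul_comm]

theorem perturbationStep_smul_one (c : ℕ → ℝ) (B : A) :
    perturbationStep β T (fun i => c i • B) (fun _ => 1) =
      fun n => c n • (B * discountedTail β T (fun _ => 1) 0) :=
  funext fun _ => smul_mul_assoc _ _ _

theorem discountedTail_smul_const {c : ℕ → ℝ} {n : ℕ}
    (hc : Summable fun j => (c (n + j) * β ^ j) • T ^ j) (B : A) :
    discountedTail β T (fun i => c i • B) n = (∑' j, (c (n + j) * β ^ j) • T ^ j) * B := by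
  simp only [discountedTail, ← hc.tsum_mul_right, mul_smul_comm, smul_mul_assoc, smul_smul,
    mul_comm]

theorem pow_smul_pow_mul_perturbationStep {c : ℕ → ℝ} {u : ℕ}
    (hc : Summable fun j => (c (u + 1 + j) * β ^ j) • T ^ j) (B D : A) :
    β ^ u • (T ^ u * perturbationStep β T (fun i => c i • B) (fun i => c i • D) u) =
      (c u * β ^ u) • (T ^ u * B * (∑' j, (c (u + 1 + j) * β ^ j) • T ^ j) * D) := by
  simp only [perturbationStep, discountedTail_smul_const hc, smul_mul_assoc, mul_smul_comm,
    smul_smul, mul_assoc, mul_comm (c u)]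

end Coefficients

section SecondOrderExpansion

variable {A : Type*} [NormedRing A] [NormedAlgebra ℝ A] {β : ℝ} {T P₁ P₂ : A} {a b : ℕ → ℝ}

/-- The second-order Taylor polynomial in `ε` of the discounted sum of the products of the factors
`T + (ε * a n) • P₁ + (ε ^ 2 / 2 * b n) • P₂`. -/
noncomputable def discountedTaylor (β : ℝ) (T P₁ P₂ : A) (a b : ℕ → ℝ) (ε : ℝ) : A :=
  let G := discountedTail β T (fun _ => 1) 0
  G + (ε * β) • ((∑' j, (a j * β ^ j) • T ^ j) * P₁ * G) +
    (ε ^ 2 / 2 * β) • ((∑' j, (b j * β ^ j) • T ^ j) * P₂ * G) +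
    (ε ^ 2 * β ^ 2) • ∑' u, (a u * β ^ u) •
      (T ^ u * P₁ * (∑' j, (a (u + 1 + j) * β ^ j) • T ^ j) * P₁ * G)

theorem discountedTaylor_eq (ha : ∀ n, Summable fun j => (a (n + j) * β ^ j) • T ^ j)
    (hb : Summable fun j => (b j * β ^ j) • T ^ j) (ε : ℝ) :
    discountedTaylor β T P₁ P₂ a b ε = discountedTail β T (fun _ => 1) 0 +
      β • discountedTail β T (perturbationStep β T (fun n => ε • a n • P₁) fun _ => 1) 0 +
      β • discountedTail β T (perturbationStep β T (fun n => (ε ^ 2 / 2) • b n • P₂) fun _ => 1) 0 +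
      β ^ 2 • discountedTail β T (perturbationStep β T (fun n => ε • a n • P₁)
        (perturbationStep β T (fun n => ε • a n • P₁) fun _ => 1)) 0 := by
  have hdouble : ∀ D : A, discountedTail β T (perturbationStep β T (fun n => a n • P₁)
      fun n => a n • D) 0 = ∑' u, (a u * β ^ u) •
        (T ^ u * P₁ * (∑' j, (a (u + 1 + j) * β ^ j) • T ^ j) * D) := fun D => by
    simp only [discountedTail, zero_add, pow_smul_pow_mul_perturbationStep (ha _)]
  simp only [perturbationStep_const_smul_left, perturbationStep_const_smul_right,
    discountedTail_const_smul, perturbationStep_smul_one, hdouble, discountedTaylor]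
  rw [discountedTail_smul_const (ha 0), discountedTail_smul_const (by simpa using hb)]
  simp only [zero_add, smul_smul, mul_assoc, mul_comm β, pow_two, mul_left_comm (β * β),
    mul_comm (β * β)]

namespace IsSubexpBigO

variable {l : Filter ℝ} {η : ℝ → ℝ} {M e : ℝ → ℕ → A} [l.NeBot]

theorem summable_norm_smul_pow (hβ : |β| < 1) (hT : IsSubexpBigO l (fun _ j => T ^ j) fun _ => 1)
    (ha : IsSubexpBigO l (fun _ => a) fun _ => 1) (n : ℕ) :
    Summable fun j => ‖(a (n + j) * β ^ j) • T ^ j‖ := by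
  have h := eventually_const.1 (hT.summable_norm_discounted hβ (ha.smul_const (1 : A))) n
  simpa only [mul_smul_comm, mul_one, smul_smul, mul_comm] using h

variable [CompleteSpace A]

theorem summable_norm_smul_pow_mul (hβ : |β| < 1)
    (hT : IsSubexpBigO l (fun _ j => T ^ j) fun _ => 1)
    (ha : IsSubexpBigO l (fun _ => a) fun _ => 1) (B D : A) :
    Summable fun u => ‖(a u * β ^ u) •
      (T ^ u * B * (∑' j, (a (u + 1 + j) * β ^ j) • T ^ j) * D)‖ := by
  have h := hT.perturbationStep hβ (ha.smul_const B) (ha.smul_const D)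
  simpa only [zero_add,
    pow_smul_pow_mul_perturbationStep (hT.summable_norm_smul_pow hβ ha _).of_norm]
    using eventually_const.1 (hT.summable_norm_discounted hβ h) 0

theorem isBigO_tsum_sub_discountedTaylor (hl : l ≤ 𝓝 0) (hβ : |β| < 1)
    (hT : IsSubexpBigO l (fun _ j => T ^ j) fun _ => 1)
    (hM₀ : ∀ ε, M ε 0 = 1) (hM : ∀ ε i, M ε (i + 1) = M ε i * (T + e ε i))
    (hM_bdd : IsSubexpBigO l M fun _ => 1)
    (hη₂ : η =O[l] fun ε => ε ^ 2) (hη₃ : (fun ε => ε ^ 3) =O[l] η)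
    (ha : IsSubexpBigO l (fun _ => a) fun _ => 1) (hb : IsSubexpBigO l (fun _ => b) fun _ => 1)
    (he : IsSubexpBigO l
      (fun ε n => e ε n - ((ε * a n) • P₁ + (ε ^ 2 / 2 * b n) • P₂)) η) :
    (fun ε => ∑' i, β ^ i • M ε i - discountedTaylor β T P₁ P₂ a b ε) =O[l] η := by
  have he₁ : IsSubexpBigO l (fun ε n => ε • a n • P₁) fun ε => ε := by
    simpa only [mul_one] using (ha.smul_const P₁).const_smul fun ε => ε
  have he₂ : IsSubexpBigO l (fun ε n => (ε ^ 2 / 2) • b n • P₂) fun ε => ε ^ 2 :=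
    ((hb.smul_const P₂).const_smul fun ε => ε ^ 2 / 2).mono <| by
      simpa only [mul_one, div_eq_inv_mul] using
        (isBigO_refl (fun ε : ℝ => ε ^ 2) l).const_mul_left _
  have hexp := hT.isBigO_tsum_mul_sub_secondOrder hβ hM₀ hM hM_bdd
    ((tendsto_id.mono_left hl).isBigO_one ℝ) hη₂ hη₃ he₁ he₂
    (by simpa only [sub_sub, smul_smul] using he) (isSubexpBigO_const_const 1)
  refine hexp.congr (fun ε => ?_) fun ε => mul_one _
  rw [discountedTaylor_eq (fun n => (hT.summable_norm_smul_pow hβ ha n).of_norm)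
    (by simpa only [zero_add] using (hT.summable_norm_smul_pow hβ hb 0).of_norm)]
  simp only [mul_one]

theorem isBigO_tsum_apply_sub_discountedTaylor {F : Type*} [NormedAddCommGroup F] [NormedSpace ℝ F]
    (φ : A →L[ℝ] F) (hl : l ≤ 𝓝 0) (hβ : |β| < 1)
    (hT : IsSubexpBigO l (fun _ j => T ^ j) fun _ => 1)
    (hM₀ : ∀ ε, M ε 0 = 1) (hM : ∀ ε i, M ε (i + 1) = M ε i * (T + e ε i))
    (hM_bdd : IsSubexpBigO l M fun _ => 1)
    (hη₂ : η =O[l] fun ε => ε ^ 2) (hη₃ : (fun ε => ε ^ 3) =O[l] η)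
    (ha : IsSubexpBigO l (fun _ => a) fun _ => 1) (hb : IsSubexpBigO l (fun _ => b) fun _ => 1)
    (he : IsSubexpBigO l
      (fun ε n => e ε n - ((ε * a n) • P₁ + (ε ^ 2 / 2 * b n) • P₂)) η) :
    (fun ε => ∑' i, β ^ i • φ (M ε i) - φ (discountedTaylor β T P₁ P₂ a b ε)) =O[l] η := by
  have hexp := hT.isBigO_tsum_sub_discountedTaylor hl hβ hM₀ hM hM_bdd hη₂ hη₃ ha hb he
  refine ((φ.isBigO_comp _ _).trans hexp).congr' ?_ .rfl
  filter_upwards [hM_bdd.summable_norm hβ] with ε hε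
  simp only [map_sub, φ.map_tsum hε.of_norm, map_smul]

end IsSubexpBigO

end SecondOrderExpansion

section LogWindow

theorem tendsto_log_one_div_nhdsGT_zero :
    Tendsto (fun ε : ℝ => Real.log (1 / ε)) (𝓝[>] 0) atTop := by
  simpa only [one_div] using! Real.tendsto_log_atTop.comp tendsto_inv_nhdsGT_zero

theorem eventually_one_le_pow_mul_pow {δ r : ℝ} (hδ : 0 < δ) (hr : 1 < r) (m : ℕ) :
    ∀ᶠ ε : ℝ in 𝓝[>] 0, ∀ n : ℕ, Real.log (1 / ε) ^ (1 + δ) < n + 1 → 1 ≤ ε ^ m * r ^ n := by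
  have hlog : 0 < Real.log r := Real.log_pos hr
  have hgrow : Tendsto (fun ε : ℝ => Real.log r * Real.log (1 / ε) ^ δ) (𝓝[>] 0) atTop :=
    ((tendsto_rpow_atTop hδ).comp tendsto_log_one_div_nhdsGT_zero).const_mul_atTop hlog
  filter_upwards [hgrow.eventually_ge_atTop (m + 1), self_mem_nhdsWithin,
    tendsto_log_one_div_nhdsGT_zero.eventually_ge_atTop (Real.log r)]
    with ε hm (hε : 0 < ε) hL n hn
  rw [← Real.log_nonneg_iff (by positivity), Real.log_mul (by positivity) (by positivity),
    Real.log_pow, Real.log_pow, ← neg_neg (Real.log ε), ← Real.log_inv, ← one_div]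
  rw [Real.rpow_add (hlog.trans_le hL), Real.rpow_one] at hn
  nlinarith

theorem IsSubexpBigO.of_log_window {E : Type*} [SeminormedAddCommGroup E] {x : ℝ → ℕ → E}
    {g : ℝ → ℝ} {C δ : ℝ} {m : ℕ} (hδ : 0 < δ) (hx : IsSubexpBigO (𝓝[>] 0) x fun _ => 1)
    (hg : (fun ε => ε ^ m) =O[𝓝[>] 0] g)
    (hwindow : ∀ᶠ ε in 𝓝[>] 0, ∀ n : ℕ, (n + 1 : ℝ) ≤ Real.log (1 / ε) ^ (1 + δ) →
      ‖x ε n‖ ≤ C * ‖g ε‖) : IsSubexpBigO (𝓝[>] 0) x g := by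
  refine isSubexpBigO_iff.2 fun q hq => ?_
  have hr : 1 < √q := Real.lt_sqrt_of_sq_lt (by rwa [one_pow])
  obtain ⟨D, hD⟩ := isSubexpBigO_iff.1 hx _ hr
  obtain ⟨K, hK⟩ := hg.bound
  refine ⟨max C (|D| * K), ?_⟩
  filter_upwards [hwindow, hD, hK, eventually_one_le_pow_mul_pow hδ hr m, self_mem_nhdsWithin]
    with ε hin hDε hKε hout (hε : 0 < ε) n
  simp only [norm_one, one_mul] at hDε
  rw [Real.norm_of_nonneg (by positivity)] at hKε
  rcases le_or_gt (n + 1 : ℝ) (Real.log (1 / ε) ^ (1 + δ)) with hn | hn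
  · have hC := hin n hn
    calc ‖x ε n‖ ≤ C * ‖g ε‖ * q ^ n :=
          hC.trans (le_mul_of_one_le_right ((norm_nonneg _).trans hC) (one_le_pow₀ hq.le))
      _ = C * (‖g ε‖ * q ^ n) := mul_assoc _ _ _
      _ ≤ max C (|D| * K) * (‖g ε‖ * q ^ n) := by gcongr; exact le_max_left _ _
  · calc ‖x ε n‖ ≤ |D| * √q ^ n := (hDε n).trans (by gcongr; exact le_abs_self D)
      _ ≤ |D| * √q ^ n * (ε ^ m * √q ^ n) := le_mul_of_one_le_right (by positivity) (hout n hn)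
      _ = |D| * ε ^ m * (√q * √q) ^ n := by ring
      _ = |D| * ε ^ m * q ^ n := by rw [Real.mul_self_sqrt (zero_le_one.trans hq.le)]
      _ ≤ |D| * (K * ‖g ε‖) * q ^ n := by gcongr
      _ = |D| * K * (‖g ε‖ * q ^ n) := by ring
      _ ≤ max C (|D| * K) * (‖g ε‖ * q ^ n) := by gcongr; exact le_max_right _ _

theorem isBigO_pow_mul_log_one_div_rpow {w : ℝ} (hw : 0 ≤ w) (m : ℕ) :
    (fun ε : ℝ => ε ^ m) =O[𝓝[>] 0] fun ε => ε ^ m * Real.log (1 / ε) ^ w := by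
  refine .of_norm_eventuallyLE ?_
  filter_upwards [tendsto_log_one_div_nhdsGT_zero.eventually_ge_atTop 1, self_mem_nhdsWithin]
    with ε hL (hε : 0 < ε)
  rw [Real.norm_of_nonneg (by positivity)]
  exact le_mul_of_one_le_right (by positivity) (Real.one_le_rpow hL hw)

theorem pow_succ_mul_log_one_div_rpow_isBigO (w : ℝ) (m : ℕ) :
    (fun ε : ℝ => ε ^ (m + 1) * Real.log (1 / ε) ^ w) =O[𝓝[>] 0] fun ε => ε ^ m := by
  have hdecay : Tendsto (fun ε : ℝ => ε * Real.log (1 / ε) ^ w) (𝓝[>] 0) (𝓝 0) := by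
    refine ((tendsto_rpow_mul_exp_neg_mul_atTop_nhds_zero w 1 one_pos).comp
      tendsto_log_one_div_nhdsGT_zero).congr' ?_
    filter_upwards [self_mem_nhdsWithin] with ε (hε : 0 < ε)
    simp [Real.exp_log hε, mul_comm]
  simpa only [pow_succ, mul_assoc, mul_one] using
    (isBigO_refl (fun ε : ℝ => ε ^ m) _).mul (hdecay.isBigO_one ℝ)

theorem IsSubexpBigO.sub_taylor_of_log_window {E : Type*} [SeminormedAddCommGroup E]
    [NormedSpace ℝ E] {X : ℝ → ℕ → E} {T P₁ P₂ : E} {a b : ℕ → ℝ} {C s δ : ℝ} (hδ : 0 < δ)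
    (hX : IsSubexpBigO (𝓝[>] 0) X fun _ => 1)
    (ha : IsSubexpBigO (𝓝[>] 0) (fun _ : ℝ => a) fun _ => 1)
    (hb : IsSubexpBigO (𝓝[>] 0) (fun _ : ℝ => b) fun _ => 1)
    (hwindow : ∀ᶠ ε in 𝓝[>] 0, ∀ n : ℕ, (n + 1 : ℝ) ≤ Real.log (1 / ε) ^ (1 + δ) →
      ‖X ε n - (T + (ε * a n) • P₁ + (ε ^ 2 / 2 * b n) • P₂)‖ ≤
        C * (ε ^ 3 * Real.log (1 / ε) ^ s)) :
    IsSubexpBigO (𝓝[>] 0) (fun ε n => X ε n - (T + (ε * a n) • P₁ + (ε ^ 2 / 2 * b n) • P₂))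
      fun ε => ε ^ 3 * Real.log (1 / ε) ^ max s 0 := by
  have hbdd : ∀ {f : ℝ → ℝ} {c : ℕ → ℝ} (v : E), Continuous f →
      IsSubexpBigO (𝓝[>] 0) (fun _ : ℝ => c) (fun _ => 1) →
      IsSubexpBigO (𝓝[>] 0) (fun ε n => (f ε * c n) • v) fun _ => 1 := fun {f c} v hf hc => by
    simpa only [smul_smul] using ((hc.smul_const v).const_smul f).mono
      (by simpa only [mul_one] using (hf.tendsto 0).mono_left nhdsWithin_le_nhds |>.isBigO_one ℝ)
  refine .of_log_window (C := |C|) (m := 3) hδ (hX.sub (((isSubexpBigO_const_const T).add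
    (hbdd P₁ continuous_id ha)).add (hbdd P₂ (by fun_prop) hb)))
    (isBigO_pow_mul_log_one_div_rpow (le_max_right _ _) 3) ?_
  filter_upwards [hwindow, tendsto_log_one_div_nhdsGT_zero.eventually_ge_atTop 1,
    self_mem_nhdsWithin] with ε hε hL (hε₀ : 0 < ε) n hn
  rw [Real.norm_of_nonneg (by positivity)]
  refine (hε n hn).trans ?_
  gcongr
  · exact le_abs_self C
  · exact le_max_left _ _

theorem tendsto_of_isBigO_sub_taylor {E : Type*} [NormedAddCommGroup E] [NormedSpace ℝ E]
    {X : ℝ → E} {T P₁ P₂ : E} {x y : ℝ} {g : ℝ → ℝ} (hg : Tendsto g (𝓝[>] 0) (𝓝 0))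
    (hX : (fun ε => X ε - (T + (ε * x) • P₁ + (ε ^ 2 / 2 * y) • P₂)) =O[𝓝[>] 0] g) :
    Tendsto X (𝓝[>] 0) (𝓝 T) := by
  have htaylor := ((by fun_prop : Continuous fun ε : ℝ =>
    T + (ε * x) • P₁ + (ε ^ 2 / 2 * y) • P₂).tendsto 0).mono_left
      (nhdsWithin_le_nhds (s := Set.Ioi 0))
  simpa using (hX.trans_tendsto hg).add htaylor

theorem exists_abs_le_of_isBigO_pow_mul_log_rpow {f : ℝ → ℝ} {m : ℕ} {w : ℝ}
    (hf : f =O[𝓝[>] 0] fun ε => ε ^ m * Real.log (1 / ε) ^ w) :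
    ∃ c > 0, ∃ ε₁ > 0, ∀ ε, 0 < ε → ε < ε₁ → |f ε| ≤ c * ε ^ m * Real.log (1 / ε) ^ w := by
  obtain ⟨c, hc, hle⟩ := hf.exists_pos
  obtain ⟨ε₁, hε₁, hsub⟩ := mem_nhdsGT_iff_exists_Ioo_subset.1
    (hle.bound.and (tendsto_log_one_div_nhdsGT_zero.eventually_ge_atTop 0))
  refine ⟨c, hc, ε₁, hε₁, fun ε hε hεε₁ => ?_⟩
  obtain ⟨hbound, hL⟩ := hsub ⟨hε, hεε₁⟩
  rw [Real.norm_eq_abs, Real.norm_of_nonneg (by positivity), ← mul_assoc] at hbound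
  exact hbound

theorem isBigO_pow_of_abs_le_rpow {a : ℕ → ℝ} {c p q : ℝ} {i₀ : ℕ}
    (ha : ∀ i ≥ i₀, |a i| ≤ c * (i : ℝ) ^ p) (hq : 1 < q) : a =O[atTop] fun i => q ^ i := by
  have hrpow : a =O[atTop] fun i : ℕ => (i : ℝ) ^ p :=
    .of_bound c <| eventually_atTop.2 ⟨i₀, fun i hi => by
      simpa only [Real.norm_eq_abs, abs_of_nonneg (Real.rpow_nonneg i.cast_nonneg p)]
        using ha i hi⟩
  refine hrpow.trans (((isLittleO_rpow_exp_pos_mul_atTop p (Real.log_pos hq)).comp_tendsto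
    tendsto_natCast_atTop_atTop).isBigO.congr_right fun i => ?_)
  rw [Function.comp_apply, mul_comm, Real.exp_nat_mul, Real.exp_log (zero_lt_one.trans hq)]

end LogWindow

section StochasticMatrices

variable {S : Type*} [Fintype S]

section IsStochastic

variable [DecidableEq S] {B : Matrix S S ℝ} {P : ℕ → Matrix S S ℝ}

theorem isStochastic_iff_mem_rowStochastic : IsStochastic B ↔ B ∈ rowStochastic ℝ S :=
  mem_rowStochastic_iff_sum.symm

theorem IsStochastic.pow (hB : IsStochastic B) (n : ℕ) : IsStochastic (B ^ n) :=
  isStochastic_iff_mem_rowStochastic.2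
    (pow_mem (isStochastic_iff_mem_rowStochastic.1 hB) n)

theorem isStochastic_prodP (hP : ∀ i, IsStochastic (P (i + 1))) (j : ℕ) :
    IsStochastic (prodP P j) := by
  refine isStochastic_iff_mem_rowStochastic.2 (Submonoid.list_prod_mem _ fun B hB => ?_)
  obtain ⟨i, -, rfl⟩ := List.mem_map.1 hB
  exact isStochastic_iff_mem_rowStochastic.1 (hP i)

theorem prodP_succ (P : ℕ → Matrix S S ℝ) (j : ℕ) : prodP P (j + 1) = prodP P j * P (j + 1) := by
  simp only [prodP, List.range_succ, List.map_append, List.map_singleton, List.prod_append,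
    List.prod_singleton]

end IsStochastic

theorem isClosed_setOf_isStochastic : IsClosed {B : Matrix S S ℝ | IsStochastic B} := by
  simp only [IsStochastic, Set.ofPred_and, Set.ofPred_forall]
  refine .inter (isClosed_iInter fun x => isClosed_iInter fun y => ?_)
    (isClosed_iInter fun x => ?_)
  · exact isClosed_le continuous_const (by fun_prop)
  · exact isClosed_eq (by fun_prop) continuous_const

open scoped Matrix.Norms.Operator

variable [DecidableEq S] {T B P₁ P₂ : Matrix S S ℝ} {β : ℝ}

theorem matNorm_eq_norm (B : Matrix S S ℝ) : matNorm B = ‖B‖ := by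
  simp only [matNorm, linfty_opNorm_def, Finset.sup_univ_eq_ciSup, NNReal.coe_iSup,
    NNReal.coe_sum, coe_nnnorm, Real.norm_eq_abs]

theorem IsStochastic.norm_le_one (hB : IsStochastic B) : ‖B‖ ≤ 1 := by
  rw [← matNorm_eq_norm]
  refine Real.iSup_le (fun x => ?_) zero_le_one
  exact (Finset.sum_congr rfl fun y _ => abs_of_nonneg (hB.1 x y)).trans_le (hB.2 x).le

theorem IsStochastic.isSubexpBigO_pow {ι : Type*} {l : Filter ι} (hT : IsStochastic T) :
    IsSubexpBigO l (fun _ j => T ^ j) fun _ => 1 :=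
  isSubexpBigO_of_eventually_norm_le (C := 1)
    (.of_forall fun _ j => by simpa using (hT.pow j).norm_le_one)

theorem inv_one_sub_smul_eq_discountedTail (hβ : |β| < 1) (hT : IsStochastic T) :
    (1 - β • T)⁻¹ = discountedTail β T (fun _ => 1) 0 :=
  inv_eq_right_inv
    ((hT.isSubexpBigO_pow (l := pure ())).one_sub_smul_mul_discountedTail_one hβ)

/-- The linear functional `B ↦ μ B r`, the expectation of the reward `r` after the transition
`B` from the initial law `μ`. -/
def expectedReward (μ r : S → ℝ) : Matrix S S ℝ →ₗ[ℝ] ℝ where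
  toFun B := μ ⬝ᵥ (B *ᵥ r)
  map_add' B C := by rw [add_mulVec, dotProduct_add]
  map_smul' t B := by rw [smul_mulVec, dotProduct_smul, RingHom.id_apply]

variable {P : ℕ → ℝ → Matrix S S ℝ} {η : ℝ → ℝ} {a b : ℕ → ℝ}

theorem isSubexpBigO_factors (hP : ∀ n, ∀ ε > 0, IsStochastic (P (n + 1) ε)) :
    IsSubexpBigO (𝓝[>] 0) (fun ε n => P (n + 1) ε) fun _ => 1 :=
  isSubexpBigO_of_eventually_norm_le (C := 1) <| by
    filter_upwards [self_mem_nhdsWithin] with ε hε n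
    simpa using (hP n ε hε).norm_le_one

theorem isSubexpBigO_prodP (hP : ∀ n, ∀ ε > 0, IsStochastic (P (n + 1) ε)) :
    IsSubexpBigO (𝓝[>] 0) (fun ε => prodP fun k => P k ε) fun _ => 1 :=
  isSubexpBigO_of_eventually_norm_le (C := 1) <| by
    filter_upwards [self_mem_nhdsWithin] with ε hε n
    simpa using (isStochastic_prodP (fun i => hP i ε hε) n).norm_le_one

theorem isStochastic_of_isSubexpBigO_sub_taylor
    (hP : ∀ n, ∀ ε > 0, IsStochastic (P (n + 1) ε)) (hη₂ : η =O[𝓝[>] 0] fun ε => ε ^ 2)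
    (hrem : IsSubexpBigO (𝓝[>] 0)
      (fun ε n => P (n + 1) ε - (T + (ε * a n) • P₁ + (ε ^ 2 / 2 * b n) • P₂)) η) :
    IsStochastic T := by
  have hη : Tendsto η (𝓝[>] 0) (𝓝 0) :=
    hη₂.trans_tendsto (((continuous_pow 2).tendsto' 0 0 (by simp)).mono_left nhdsWithin_le_nhds)
  exact isClosed_setOf_isStochastic.mem_of_tendsto
    (tendsto_of_isBigO_sub_taylor hη (hrem.isBigO_apply 0)) (eventually_mem_nhdsWithin.mono (hP 0))

theorem isSubexpBigO_sub_taylor_of_matNorm_le {s δ : ℝ} (hδ : 0 < δ)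
    (hP : ∀ k : ℕ, 1 ≤ k → ∀ ε : ℝ, 0 < ε → IsStochastic (P k ε))
    (ha : IsSubexpBigO (𝓝[>] 0) (fun _ : ℝ => a) fun _ => 1)
    (hb : IsSubexpBigO (𝓝[>] 0) (fun _ : ℝ => b) fun _ => 1)
    (hwindow : ∃ c > (0 : ℝ), ∃ ε₀ > (0 : ℝ), ∀ ε : ℝ, 0 < ε → ε < ε₀ →
      ∀ i : ℕ, 1 ≤ i → (i : ℝ) ≤ Real.log (1 / ε) ^ (1 + δ) →
        matNorm (P i ε - (T + (ε * a i) • P₁ + (ε ^ 2 / 2 * b i) • P₂))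
          ≤ c * ε ^ 3 * Real.log (1 / ε) ^ s) :
    IsSubexpBigO (𝓝[>] 0)
      (fun ε n => P (n + 1) ε - (T + (ε * a (n + 1)) • P₁ + (ε ^ 2 / 2 * b (n + 1)) • P₂))
      fun ε => ε ^ 3 * Real.log (1 / ε) ^ max s 0 := by
  obtain ⟨c, -, ε₀, hε₀, hle⟩ := hwindow
  refine .sub_taylor_of_log_window (C := c) hδ
    (isSubexpBigO_factors fun n ε hε => hP (n + 1) n.succ_pos ε hε) (ha.shift 1) (hb.shift 1) ?_
  filter_upwards [Ioo_mem_nhdsGT hε₀] with ε hε n hn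
  simpa only [matNorm_eq_norm, mul_assoc] using
    hle ε hε.1 hε.2 (n + 1) n.succ_pos (by exact_mod_cast hn)

variable {α : ℝ}

theorem abs_exp_neg_lt_one (hα : 0 < α) : |Real.exp (-α)| < 1 := by
  simpa only [Real.abs_exp, Real.exp_lt_one_iff, neg_lt_zero] using hα

theorem summable_abs_mul_exp_mul_matNorm_pow (hα : 0 < α) (hT : IsStochastic T)
    (ha : IsSubexpBigO (𝓝[>] 0) (fun _ : ℝ => a) fun _ => 1) (n : ℕ) :
    Summable fun j : ℕ => |a (n + j)| * Real.exp (-α * j) * matNorm (T ^ j) := by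
  simpa only [norm_smul, norm_mul, norm_pow, Real.norm_eq_abs, Real.abs_exp, ← Real.exp_nat_mul,
    mul_comm _ (-α), ← matNorm_eq_norm] using
    hT.isSubexpBigO_pow.summable_norm_smul_pow (abs_exp_neg_lt_one hα) ha n

theorem summable_mul_exp_smul_pow (hα : 0 < α) (hT : IsStochastic T)
    (ha : IsSubexpBigO (𝓝[>] 0) (fun _ : ℝ => a) fun _ => 1) (n : ℕ) :
    Summable fun j : ℕ => (a (n + j) * Real.exp (-α * j)) • T ^ j := by
  simp only [mul_comm (-α), Real.exp_nat_mul]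
  exact (hT.isSubexpBigO_pow.summable_norm_smul_pow (abs_exp_neg_lt_one hα) ha n).of_norm

theorem summable_matNorm_mul_exp_smul_pow_mul (hα : 0 < α) (hT : IsStochastic T)
    (ha : IsSubexpBigO (𝓝[>] 0) (fun _ : ℝ => a) fun _ => 1) (B C D : Matrix S S ℝ) :
    Summable fun u : ℕ => matNorm ((a (u + 1) * Real.exp (-α * u)) •
      (T ^ u * B * (∑' j : ℕ, (a (u + 2 + j) * Real.exp (-α * j)) • T ^ j) * C * D)) := by
  have hidx : ∀ u j : ℕ, u + 1 + j + 1 = u + 2 + j := fun u j => by ring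
  have hsum := hT.isSubexpBigO_pow.summable_norm_smul_pow_mul (abs_exp_neg_lt_one hα)
    (ha.shift 1) B (C * D)
  simp only [hidx, ← mul_assoc] at hsum
  simp only [matNorm_eq_norm, mul_comm (-α), Real.exp_nat_mul]
  exact hsum

theorem summable_mul_exp_smul_pow_mul (hα : 0 < α) (hT : IsStochastic T)
    (ha : IsSubexpBigO (𝓝[>] 0) (fun _ : ℝ => a) fun _ => 1) (B C D : Matrix S S ℝ) :
    Summable fun u : ℕ => (a (u + 1) * Real.exp (-α * u)) •
      (T ^ u * B * (∑' j : ℕ, (a (u + 2 + j) * Real.exp (-α * j)) • T ^ j) * C * D) :=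
  .of_norm <| by
    simpa only [matNorm_eq_norm] using summable_matNorm_mul_exp_smul_pow_mul hα hT ha B C D

theorem isBigO_kappa_sub (hα : 0 < α) (μ r : S → ℝ)
    (hP : ∀ n, ∀ ε > 0, IsStochastic (P (n + 1) ε)) (hT : IsStochastic T)
    (hη₂ : η =O[𝓝[>] 0] fun ε => ε ^ 2) (hη₃ : (fun ε => ε ^ 3) =O[𝓝[>] 0] η)
    (ha : IsSubexpBigO (𝓝[>] 0) (fun _ : ℝ => a) fun _ => 1)
    (hb : IsSubexpBigO (𝓝[>] 0) (fun _ : ℝ => b) fun _ => 1)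
    (hrem : IsSubexpBigO (𝓝[>] 0)
      (fun ε n => P (n + 1) ε - (T + (ε * a n) • P₁ + (ε ^ 2 / 2 * b n) • P₂)) η) :
    (fun ε => kappa α μ r (fun k => P k ε) -
      expectedReward μ r (discountedTaylor (Real.exp (-α)) T P₁ P₂ a b ε)) =O[𝓝[>] 0] η := by
  have hβ := abs_exp_neg_lt_one hα
  have hexp := hT.isSubexpBigO_pow.isBigO_tsum_apply_sub_discountedTaylor
    (LinearMap.toContinuousLinearMap (expectedReward μ r))
    (M := fun ε => prodP fun k => P k ε) (e := fun ε n => P (n + 1) ε - T)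
    nhdsWithin_le_nhds hβ (fun ε => by simp [prodP])
    (fun ε i => by rw [add_sub_cancel, prodP_succ]) (isSubexpBigO_prodP hP) hη₂ hη₃ ha hb
    (by simpa only [sub_sub, add_assoc] using hrem)
  refine hexp.congr_left fun ε => ?_
  simp only [kappa, mul_comm (-α), Real.exp_nat_mul]
  rfl

theorem expectedReward_discountedTaylor (hα : 0 < α) (hT : IsStochastic T) (μ r : S → ℝ)
    (ε : ℝ) :
    expectedReward μ r (discountedTaylor (Real.exp (-α)) T P₁ P₂ (fun k => a (k + 1))
        (fun k => b (k + 1)) ε) =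
      μ ⬝ᵥ ((1 - Real.exp (-α) • T)⁻¹ *ᵥ r) +
        ε * Real.exp (-α) *
          (μ ⬝ᵥ (((∑' k : ℕ, (a (k + 1) * Real.exp (-α * k)) • T ^ k) * P₁ *
            (1 - Real.exp (-α) • T)⁻¹) *ᵥ r)) +
        ε ^ 2 / 2 * Real.exp (-α) *
          (μ ⬝ᵥ (((∑' k : ℕ, (b (k + 1) * Real.exp (-α * k)) • T ^ k) * P₂ *
            (1 - Real.exp (-α) • T)⁻¹) *ᵥ r)) +
        ε ^ 2 * Real.exp (-(2 * α)) *
          (μ ⬝ᵥ ((∑' u : ℕ, (a (u + 1) * Real.exp (-α * u)) •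
            (T ^ u * P₁ * (∑' j : ℕ, (a (u + 2 + j) * Real.exp (-α * j)) • T ^ j) * P₁ *
              (1 - Real.exp (-α) • T)⁻¹)) *ᵥ r)) := by
  have hβ := abs_exp_neg_lt_one hα
  have hexp_two : Real.exp (-(2 * α)) = Real.exp (-α) ^ 2 := by
    rw [← Real.exp_nat_mul]; congr 1; push_cast; ring
  have hidx : ∀ u j : ℕ, u + 1 + j + 1 = u + 2 + j := fun u j => by ring
  simp only [inv_one_sub_smul_eq_discountedTail hβ hT, hexp_two, mul_comm (-α), Real.exp_nat_mul,
    discountedTaylor, map_add, map_smul, smul_eq_mul, hidx]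
  rfl

end StochasticMatrices

theorem discounted_reward_second_order_general
    {S : Type*} [Fintype S] [DecidableEq S]
    (P : ℕ → ℝ → Matrix S S ℝ) (a1 a2 : ℕ → ℝ) (Pt Pt1 Pt2 : Matrix S S ℝ)
    (s δ : ℝ) (hδ : 0 < δ)
    (hstoch : ∀ k : ℕ, 1 ≤ k → ∀ ε : ℝ, 0 < ε → IsStochastic (P k ε))
    (hi : ∃ c > (0:ℝ), ∃ ε₀ > (0:ℝ), ∀ ε : ℝ, 0 < ε → ε < ε₀ →
      ∀ i : ℕ, 1 ≤ i → (i : ℝ) ≤ Real.log (1/ε) ^ (1 + δ) →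
        matNorm (P i ε - (Pt + (ε * a1 i) • Pt1 + (ε ^ 2 / 2 * a2 i) • Pt2))
          ≤ c * ε ^ 3 * Real.log (1/ε) ^ s)
    (ha1 : ∀ q : ℝ, 1 < q → a1 =O[atTop] fun i : ℕ => q ^ i)
    (ha2 : ∀ q : ℝ, 1 < q → a2 =O[atTop] fun i : ℕ => q ^ i)
    (α : ℝ) (hα : 0 < α)
    (μ r : S → ℝ) :
    IsStochastic Pt ∧
      Summable (fun k : ℕ => |a1 (k + 1)| * Real.exp (-α * k) * matNorm (Pt ^ k)) ∧
      Summable (fun k : ℕ => (a1 (k + 1) * Real.exp (-α * k)) • Pt ^ k) ∧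
      Summable (fun k : ℕ => |a2 (k + 1)| * Real.exp (-α * k) * matNorm (Pt ^ k)) ∧
      Summable (fun k : ℕ => (a2 (k + 1) * Real.exp (-α * k)) • Pt ^ k) ∧
      (∀ u : ℕ, Summable (fun j : ℕ => |a1 (u + 2 + j)| * Real.exp (-α * j) * matNorm (Pt ^ j)) ∧
        Summable (fun j : ℕ => (a1 (u + 2 + j) * Real.exp (-α * j)) • Pt ^ j)) ∧
      Summable (fun u : ℕ => matNorm
        ((a1 (u + 1) * Real.exp (-α * u)) •
          (Pt ^ u * Pt1 * (∑' j : ℕ, (a1 (u + 2 + j) * Real.exp (-α * j)) • Pt ^ j) * Pt1 *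
            (1 - Real.exp (-α) • Pt)⁻¹))) ∧
      Summable (fun u : ℕ =>
        (a1 (u + 1) * Real.exp (-α * u)) •
          (Pt ^ u * Pt1 * (∑' j : ℕ, (a1 (u + 2 + j) * Real.exp (-α * j)) • Pt ^ j) * Pt1 *
            (1 - Real.exp (-α) • Pt)⁻¹)) ∧
      ∃ w : ℝ, ∃ c > (0:ℝ), ∃ ε₁ > (0:ℝ), ∀ ε : ℝ, 0 < ε → ε < ε₁ →
        |kappa α μ r (fun k => P k ε) -
            (μ ⬝ᵥ ((1 - Real.exp (-α) • Pt)⁻¹ *ᵥ r) +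
              ε * Real.exp (-α) *
                (μ ⬝ᵥ (((∑' k : ℕ, (a1 (k + 1) * Real.exp (-α * k)) • Pt ^ k) * Pt1 *
                    (1 - Real.exp (-α) • Pt)⁻¹) *ᵥ r)) +
              ε ^ 2 / 2 * Real.exp (-α) *
                (μ ⬝ᵥ (((∑' k : ℕ, (a2 (k + 1) * Real.exp (-α * k)) • Pt ^ k) * Pt2 *
                    (1 - Real.exp (-α) • Pt)⁻¹) *ᵥ r)) +
              ε ^ 2 * Real.exp (-(2 * α)) *
                (μ ⬝ᵥ ((∑' u : ℕ,
                    (a1 (u + 1) * Real.exp (-α * u)) •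
                      (Pt ^ u * Pt1 *
                        (∑' j : ℕ, (a1 (u + 2 + j) * Real.exp (-α * j)) • Pt ^ j) * Pt1 *
                        (1 - Real.exp (-α) • Pt)⁻¹)) *ᵥ r)))|
          ≤ c * ε ^ 3 * Real.log (1/ε) ^ w := by
  have hP : ∀ n, ∀ ε > 0, IsStochastic (P (n + 1) ε) := fun n => hstoch (n + 1) n.succ_pos
  have ha := isSubexpBigO_const (l := 𝓝[>] (0 : ℝ)) ha1
  have hb := isSubexpBigO_const (l := 𝓝[>] (0 : ℝ)) ha2
  have hrem := isSubexpBigO_sub_taylor_of_matNorm_le hδ hstoch ha hb hi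
  have hη₂ := pow_succ_mul_log_one_div_rpow_isBigO (max s 0) 2
  have hη₃ := isBigO_pow_mul_log_one_div_rpow (le_max_right s 0) 3
  have hPt := isStochastic_of_isSubexpBigO_sub_taylor hP hη₂ hrem
  have hkappa := isBigO_kappa_sub hα μ r hP hPt hη₂ hη₃ (ha.shift 1) (hb.shift 1) hrem
  simp only [expectedReward_discountedTaylor hα hPt] at hkappa
  exact ⟨hPt,
    by simpa using summable_abs_mul_exp_mul_matNorm_pow hα hPt (ha.shift 1) 0,
    by simpa using summable_mul_exp_smul_pow hα hPt (ha.shift 1) 0,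
    by simpa using summable_abs_mul_exp_mul_matNorm_pow hα hPt (hb.shift 1) 0,
    by simpa using summable_mul_exp_smul_pow hα hPt (hb.shift 1) 0,
    fun u => ⟨summable_abs_mul_exp_mul_matNorm_pow hα hPt ha (u + 2),
      summable_mul_exp_smul_pow hα hPt ha (u + 2)⟩,
    summable_matNorm_mul_exp_smul_pow_mul hα hPt ha _ _ _,
    summable_mul_exp_smul_pow_mul hα hPt ha _ _ _,
    max s 0, exists_abs_le_of_isBigO_pow_mul_log_rpow hkappa⟩

/-- Theorem 2: under Assumption 2, P̃ is stochastic, the displayed series converge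
absolutely, and κ(ε) admits the stated second-order expansion with error
O(ε³(log(1/ε))^w) as ε ↓ 0. -/
theorem discounted_reward_second_order
    {S : Type*} [Fintype S] [Nonempty S] [DecidableEq S]
    (P : ℕ → ℝ → Matrix S S ℝ) (a1 a2 : ℕ → ℝ) (Pt Pt1 Pt2 : Matrix S S ℝ)
    (s δ p : ℝ) (hδ : 0 < δ) (hp : 0 < p)
    (hstoch : ∀ k : ℕ, 1 ≤ k → ∀ ε : ℝ, 0 < ε → IsStochastic (P k ε))
    (hi : ∃ c > (0:ℝ), ∃ ε₀ > (0:ℝ), ∀ ε : ℝ, 0 < ε → ε < ε₀ →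
      ∀ i : ℕ, 1 ≤ i → (i : ℝ) ≤ Real.log (1/ε) ^ (1 + δ) →
        matNorm (P i ε - (Pt + (ε * a1 i) • Pt1 + (ε ^ 2 / 2 * a2 i) • Pt2))
          ≤ c * ε ^ 3 * Real.log (1/ε) ^ s)
    (hii : ∃ c > (0:ℝ), ∃ i₀ : ℕ, ∀ i : ℕ, i₀ ≤ i →
      |a1 i| ≤ c * (i : ℝ) ^ p ∧ |a2 i| ≤ c * (i : ℝ) ^ p)
    (α : ℝ) (hα : 0 < α)
    (μ r : S → ℝ) (hμ0 : ∀ x, 0 ≤ μ x) (hμ1 : ∑ x, μ x = 1) :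
    IsStochastic Pt ∧
      Summable (fun k : ℕ => |a1 (k + 1)| * Real.exp (-α * k) * matNorm (Pt ^ k)) ∧
      Summable (fun k : ℕ => (a1 (k + 1) * Real.exp (-α * k)) • Pt ^ k) ∧
      Summable (fun k : ℕ => |a2 (k + 1)| * Real.exp (-α * k) * matNorm (Pt ^ k)) ∧
      Summable (fun k : ℕ => (a2 (k + 1) * Real.exp (-α * k)) • Pt ^ k) ∧
      (∀ u : ℕ, Summable (fun j : ℕ => |a1 (u + 2 + j)| * Real.exp (-α * j) * matNorm (Pt ^ j)) ∧
        Summable (fun j : ℕ => (a1 (u + 2 + j) * Real.exp (-α * j)) • Pt ^ j)) ∧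
      Summable (fun u : ℕ => matNorm
        ((a1 (u + 1) * Real.exp (-α * u)) •
          (Pt ^ u * Pt1 * (∑' j : ℕ, (a1 (u + 2 + j) * Real.exp (-α * j)) • Pt ^ j) * Pt1 *
            (1 - Real.exp (-α) • Pt)⁻¹))) ∧
      Summable (fun u : ℕ =>
        (a1 (u + 1) * Real.exp (-α * u)) •
          (Pt ^ u * Pt1 * (∑' j : ℕ, (a1 (u + 2 + j) * Real.exp (-α * j)) • Pt ^ j) * Pt1 *
            (1 - Real.exp (-α) • Pt)⁻¹)) ∧
      ∃ w : ℝ, ∃ c > (0:ℝ), ∃ ε₁ > (0:ℝ), ∀ ε : ℝ, 0 < ε → ε < ε₁ →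
        |kappa α μ r (fun k => P k ε) -
            (μ ⬝ᵥ ((1 - Real.exp (-α) • Pt)⁻¹ *ᵥ r) +
              ε * Real.exp (-α) *
                (μ ⬝ᵥ (((∑' k : ℕ, (a1 (k + 1) * Real.exp (-α * k)) • Pt ^ k) * Pt1 *
                    (1 - Real.exp (-α) • Pt)⁻¹) *ᵥ r)) +
              ε ^ 2 / 2 * Real.exp (-α) *
                (μ ⬝ᵥ (((∑' k : ℕ, (a2 (k + 1) * Real.exp (-α * k)) • Pt ^ k) * Pt2 *
                    (1 - Real.exp (-α) • Pt)⁻¹) *ᵥ r)) +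
              ε ^ 2 * Real.exp (-(2 * α)) *
                (μ ⬝ᵥ ((∑' u : ℕ,
                    (a1 (u + 1) * Real.exp (-α * u)) •
                      (Pt ^ u * Pt1 *
                        (∑' j : ℕ, (a1 (u + 2 + j) * Real.exp (-α * j)) • Pt ^ j) * Pt1 *
                        (1 - Real.exp (-α) • Pt)⁻¹)) *ᵥ r)))|
          ≤ c * ε ^ 3 * Real.log (1/ε) ^ w := by
  obtain ⟨c, -, i₀, hc⟩ := hii
  exact discounted_reward_second_order_general P a1 a2 Pt Pt1 Pt2 s δ hδ hstoch hi
    (fun q => isBigO_pow_of_abs_le_rpow fun i hi₀ => (hc i hi₀).1)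
    (fun q => isBigO_pow_of_abs_le_rpow fun i hi₀ => (hc i hi₀).2) α hα μ r
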